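/- Let ε be a real number with 0 < ε ≤ 1/2. There exist constants c > 0 and C ≥ 1 such that for every integer n ≥ 2 there is an instance (J,M) of P||C_max with at most C·n jobs, at most C·n machines, processing times p_j ∈ {1,2}, and opt(J,M) = 2, with the following property: every polytope Q̄ ⊆ Q(J,M) such that (i) every extreme point of Q̄ is the assignment vector x^σ of some schedule σ with makespan at most (3/2 − ε)·opt(J,M), and (ii) Q̄ contains x^σ for every schedule σ of makespan opt(J,M) = 2, satisfies xc(Q̄) ≥ 2^{c·n/log n}. -/

import Mathlib

open Finset

noncomputable section

/-- An extended formulation of size `k` (number of inequalities) for `P ⊆ ℝ^ι`. -/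
def IsEF {ι : Type} [Fintype ι] (P : Set (ι → ℝ)) (k : ℕ) : Prop :=
  ∃ (e l : ℕ) (A : Matrix (Fin k) (Fin e) ℝ) (b : Fin k → ℝ)
    (C : Matrix (Fin l) (Fin e) ℝ) (d : Fin l → ℝ)
    (π : (Fin e → ℝ) →ᵃ[ℝ] (ι → ℝ)),
    π '' {y | (∀ r, A.mulVec y r ≤ b r) ∧ (∀ r, C.mulVec y r = d r)} = P

/-- The extension complexity of `P`. -/
noncomputable def xc {ι : Type} [Fintype ι] (P : Set (ι → ℝ)) : ℕ :=
  sInf {k | IsEF P k}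

/-- The load of machine `i` under schedule `σ`. -/
def load {n m : ℕ} (p : Fin n → ℕ) (σ : Fin n → Fin m) (i : Fin m) : ℕ :=
  ∑ j, if σ j = i then p j else 0

/-- The makespan of a schedule: the maximum machine load. -/
def makespan {n m : ℕ} (p : Fin n → ℕ) (σ : Fin n → Fin m) : ℕ :=
  Finset.univ.sup (load p σ)

/-- The optimal makespan of the instance. -/
noncomputable def optMakespan (n m : ℕ) (p : Fin n → ℕ) : ℕ :=
  sInf {t | ∃ σ : Fin n → Fin m, makespan p σ = t}

/-- The 0/1 assignment vector of a schedule, indexed by machine-job pairs. -/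
def assignVec {n m : ℕ} (σ : Fin n → Fin m) : Fin m × Fin n → ℝ :=
  fun q => if σ q.2 = q.1 then 1 else 0

/-- `Q(J,M)`: the convex hull of the assignment vectors of all schedules. -/
def Qpoly (n m : ℕ) : Set (Fin m × Fin n → ℝ) :=
  convexHull ℝ {x | ∃ σ : Fin n → Fin m, x = assignVec σ}

/-- `P(J,M)`: the convex hull of all points `(x^σ, T)` where `σ` is a schedule and the
natural number `T` upper-bounds every machine load; the `T`-coordinate is the `none`
coordinate of the ambient space `ℝ^(Option (M × J))`. -/
def Ppoly (n m : ℕ) (p : Fin n → ℕ) : Set (Option (Fin m × Fin n) → ℝ) :=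
  convexHull ℝ {z | ∃ (σ : Fin n → Fin m) (t : ℕ), (∀ i, load p σ i ≤ t) ∧
    z = fun q => Option.elim q (t : ℝ) (fun ij => assignVec σ ij)}

/-- The **Farkas lemma** for finitely many linear functionals on a real vector space. -/
lemma farkas {W κ : Type*} [AddCommGroup W] [Module ℝ W] (s : Finset κ) :
    ∀ (a : κ → W →ₗ[ℝ] ℝ) (b : W →ₗ[ℝ] ℝ),
      (∀ x, (∀ i ∈ s, a i x ≤ 0) → b x ≤ 0) →
      ∃ c : κ → ℝ, (∀ i, 0 ≤ c i) ∧ b = ∑ i ∈ s, c i • a i := by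
  classical
  induction s using Finset.induction_on with
  | empty =>
    intro a b h
    refine ⟨0, fun _ => le_rfl, ?_⟩
    ext x
    have h1 := h x (by simp)
    have h2 := h (-x) (by simp)
    simp only [map_neg] at h2
    simpa using le_antisymm h1 (by linarith)
  | insert m s hm ih =>
    intro a b h
    by_cases hs : ∀ x, (∀ i ∈ s, a i x ≤ 0) → b x ≤ 0
    · obtain ⟨c, hc, hb⟩ := ih a b hs
      refine ⟨Function.update c m 0, fun i => ?_, ?_⟩
      · by_cases him : i = m
        · subst him; simp
        · simpa [him] using hc i
      · rw [Finset.sum_insert hm, hb]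
        simp only [Function.update_self, zero_smul, zero_add]
        refine Finset.sum_congr rfl fun i hi => ?_
        rw [Function.update_of_ne (ne_of_mem_of_not_mem hi hm)]
    · push Not at hs
      obtain ⟨x₁, hx₁, hbx₁⟩ := hs
      have ham : 0 < a m x₁ := by
        by_contra hcon
        refine absurd (h x₁ ?_) (not_le.2 hbx₁)
        intro i hi
        rcases Finset.mem_insert.1 hi with rfl | hi
        · exact not_lt.1 hcon
        · exact hx₁ i hi
      set x₀ := (a m x₁)⁻¹ • x₁ with hx₀
      have hm1 : a m x₀ = 1 := by simp [hx₀, ham.ne']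
      have hb0 : 0 < b x₀ := by
        simp only [hx₀, map_smul, smul_eq_mul]; positivity
      have ha0 : ∀ i ∈ s, a i x₀ ≤ 0 := fun i hi => by
        simp only [hx₀, map_smul, smul_eq_mul]
        exact mul_nonpos_of_nonneg_of_nonpos (by positivity) (hx₁ i hi)
      obtain ⟨c, hc, hb⟩ := ih (fun i => a i - a i x₀ • a m) (b - b x₀ • a m) (by
        intro x hx
        have := h (x - a m x • x₀) (by
          intro i hi
          rcases Finset.mem_insert.1 hi with rfl | hi
          · simp [hm1]
          · have := hx i hi
            simp only [LinearMap.sub_apply, LinearMap.smul_apply, smul_eq_mul] at this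
            simp only [map_sub, map_smul, smul_eq_mul]
            linarith)
        simp only [map_sub, map_smul, smul_eq_mul] at this
        simp only [LinearMap.sub_apply, LinearMap.smul_apply, smul_eq_mul]
        linarith)
      refine ⟨Function.update c m (b x₀ - ∑ i ∈ s, c i * a i x₀), fun i => ?_, ?_⟩
      · by_cases him : i = m
        · subst him
          simp only [Function.update_self]
          have : ∑ i ∈ s, c i * a i x₀ ≤ 0 := Finset.sum_nonpos fun i hi =>
            mul_nonpos_of_nonneg_of_nonpos (hc i) (ha0 i hi)
          linarith
        · simpa [him] using hc i
      · rw [Finset.sum_insert hm]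
        have : ∑ i ∈ s, Function.update c m (b x₀ - ∑ i ∈ s, c i * a i x₀) i • a i =
            ∑ i ∈ s, c i • a i := Finset.sum_congr rfl fun i hi => by
          rw [Function.update_of_ne (ne_of_mem_of_not_mem hi hm)]
        rw [this, Function.update_self]
        have hb' : b = b x₀ • a m + ∑ i ∈ s, c i • (a i - a i x₀ • a m) := by
          rw [← hb]; abel
        ext x
        have := congrArg (fun f => f x) hb'
        simp only [LinearMap.add_apply, LinearMap.smul_apply, smul_eq_mul, LinearMap.sum_apply,
          LinearMap.sub_apply] at this ⊢
        rw [this, sub_mul, Finset.sum_mul, sub_add_eq_add_sub, add_sub_assoc,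
          ← Finset.sum_sub_distrib]
        congr 1
        exact Finset.sum_congr rfl fun i _ => by ring

/-- Affine form of the Farkas lemma: an affine functional that is nonnegative on a nonempty
polyhedron is a nonnegative combination of its slacks and a constant. -/
lemma affine_farkas {e k l : ℕ} (A : Matrix (Fin k) (Fin e) ℝ) (b : Fin k → ℝ)
    (C : Matrix (Fin l) (Fin e) ℝ) (d : Fin l → ℝ) (y₀ : Fin e → ℝ)
    (hA₀ : ∀ r, A.mulVec y₀ r ≤ b r) (hC₀ : ∀ r, C.mulVec y₀ r = d r)
    (ℓ : (Fin e → ℝ) →ᵃ[ℝ] ℝ)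
    (hℓ : ∀ y, (∀ r, A.mulVec y r ≤ b r) → (∀ r, C.mulVec y r = d r) → 0 ≤ ℓ y) :
    ∃ c : Option (Fin k) → ℝ, (∀ i, 0 ≤ c i) ∧ ∀ y, (∀ r, C.mulVec y r = d r) →
      ℓ y = c none + ∑ i, (b i - A.mulVec y i) * c (some i) := by
  have hdec : ∀ y, ℓ y = ℓ.linear y + ℓ 0 := fun y => by
    have := ℓ.map_vadd 0 y
    simpa using this
  let K : Submodule ℝ ((Fin e → ℝ) × ℝ) :=
    LinearMap.ker (C.mulVecLin.coprod (-(LinearMap.toSpanSingleton ℝ (Fin l → ℝ) d)))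
  have hK : ∀ z : (Fin e → ℝ) × ℝ, z ∈ K ↔ ∀ r, C.mulVec z.1 r = z.2 * d r := by
    intro z
    simp only [K, LinearMap.mem_ker, LinearMap.coprod_apply, LinearMap.neg_apply,
      LinearMap.toSpanSingleton_apply, Matrix.mulVecLin_apply, funext_iff, Pi.add_apply,
      Pi.neg_apply, Pi.smul_apply, smul_eq_mul, Pi.zero_apply]
    exact forall_congr' fun r => ⟨fun h => by linarith, fun h => by linarith⟩
  let a : Option (Fin k) → K →ₗ[ℝ] ℝ := fun i => i.elim
    ((-(LinearMap.snd ℝ (Fin e → ℝ) ℝ)).comp K.subtype)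
    (fun i => (((LinearMap.proj i).comp A.mulVecLin).coprod
      (-(LinearMap.toSpanSingleton ℝ ℝ (b i)))).comp K.subtype)
  let β : K →ₗ[ℝ] ℝ :=
    (-(ℓ.linear.coprod (LinearMap.toSpanSingleton ℝ ℝ (ℓ 0)))).comp K.subtype
  have ha_none : ∀ z : K, a none z = -z.1.2 := fun z => rfl
  have ha_some : ∀ (i) (z : K), a (some i) z = A.mulVec z.1.1 i - z.1.2 * b i := fun i z => by
    simp [a, sub_eq_add_neg]
  have hβ : ∀ z : K, β z = -(ℓ.linear z.1.1 + z.1.2 * ℓ 0) := fun z => by simp [β]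
  obtain ⟨c, hc, hcβ⟩ := farkas Finset.univ a β (by
    rintro ⟨⟨y, t⟩, hz⟩ hle
    have hCz := (hK _).1 hz
    have ht := hle none (Finset.mem_univ _)
    have hAz := fun i => hle (some i) (Finset.mem_univ _)
    simp only [ha_some] at hAz
    rw [ha_none] at ht
    rw [hβ]
    simp only at ht hAz hCz ⊢
    have ht0 : 0 ≤ t := by linarith
    rcases ht0.eq_or_lt with rfl | htpos
    · by_contra! hneg
      have hneg' : ℓ.linear y < 0 := by linarith
      have key : ∀ s : ℝ, 0 ≤ s → 0 ≤ ℓ y₀ + s * ℓ.linear y := by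
        intro s hs
        have := hℓ (y₀ + s • y) (fun r => ?_) (fun r => ?_)
        · rw [hdec, map_add, map_smul] at this
          rw [hdec y₀]
          simp only [smul_eq_mul] at this
          linarith
        · rw [Matrix.mulVec_add, Matrix.mulVec_smul]
          simp only [Pi.add_apply, Pi.smul_apply, smul_eq_mul]
          have := hA₀ r
          have h2 := mul_nonpos_of_nonneg_of_nonpos hs (by simpa using hAz r)
          linarith
        · rw [Matrix.mulVec_add, Matrix.mulVec_smul]
          simp only [Pi.add_apply, Pi.smul_apply, smul_eq_mul]
          rw [hC₀ r, hCz r]; ring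
      have h0 := hℓ y₀ hA₀ hC₀
      have := key ((ℓ y₀ + 1) / (-ℓ.linear y)) (div_nonneg (by linarith) (by linarith))
      rw [div_mul_eq_mul_div, div_neg, mul_div_assoc, div_self hneg'.ne] at this
      linarith
    · have := hℓ (t⁻¹ • y) (fun r => ?_) (fun r => ?_)
      · rw [hdec, map_smul, smul_eq_mul] at this
        have h2 := mul_nonneg ht0 this
        rw [mul_add, ← mul_assoc, mul_inv_cancel₀ htpos.ne', one_mul] at h2
        linarith
      · rw [Matrix.mulVec_smul]
        simp only [Pi.smul_apply, smul_eq_mul]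
        rw [inv_mul_le_iff₀ htpos]
        have := hAz r
        linarith
      · rw [Matrix.mulVec_smul]
        simp only [Pi.smul_apply, smul_eq_mul]
        rw [hCz r, ← mul_assoc, inv_mul_cancel₀ htpos.ne', one_mul])
  refine ⟨c, hc, fun y hy => ?_⟩
  have hmem : ((y, 1) : (Fin e → ℝ) × ℝ) ∈ K := (hK _).2 (by simpa using hy)
  have := congrArg (fun f => f ⟨(y, 1), hmem⟩) hcβ
  simp only [LinearMap.add_apply, LinearMap.sum_apply, LinearMap.smul_apply, smul_eq_mul,
    Fintype.sum_option, ha_none, ha_some, hβ, one_mul] at this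
  rw [hdec]
  have h2 : ∑ i, (b i - A.mulVec y i) * c (some i) =
      -∑ i, c (some i) * (A.mulVec y i - b i) := by
    rw [← Finset.sum_neg_distrib]
    exact Finset.sum_congr rfl fun i _ => by ring
  rw [h2]
  linarith

/-- The Yannakakis factorization: an extended formulation of size `k` yields a nonnegative
factorization with `k + 1` terms of every slack matrix. -/
lemma IsEF.exists_factorization {ι : Type} [Fintype ι] {P : Set (ι → ℝ)} {k : ℕ}
    (h : IsEF P k) {X Y : Type*} [Nonempty X] (p : X → ι → ℝ) (hp : ∀ x, p x ∈ P)
    (w : Y → (ι → ℝ) →ᵃ[ℝ] ℝ) (hw : ∀ y, ∀ z ∈ P, 0 ≤ w y z) :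
    ∃ (f : Option (Fin k) → X → ℝ) (g : Option (Fin k) → Y → ℝ),
      (∀ t x, 0 ≤ f t x) ∧ (∀ t y, 0 ≤ g t y) ∧
      ∀ x y, ∑ t, f t x * g t y = w y (p x) := by
  obtain ⟨e, l, A, b, C, d, π, rfl⟩ := h
  choose q hq hqp using hp
  obtain ⟨x₀⟩ := ‹Nonempty X›
  choose c hc hcw using fun y => affine_farkas A b C d (q x₀) (hq x₀).1 (hq x₀).2
    ((w y).comp π) (fun z h1 h2 => hw y _ ⟨z, ⟨h1, h2⟩, rfl⟩)
  refine ⟨fun t x => t.elim 1 (fun i => b i - A.mulVec (q x) i), fun t y => c y t, ?_,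
    fun t y => hc y t, fun x y => ?_⟩
  · rintro (_ | i) x
    · exact zero_le_one
    · exact sub_nonneg.2 ((hq x).1 i)
  · rw [Fintype.sum_option, ← hqp x]
    have := hcw y (q x) (hq x).2
    simp only [AffineMap.comp_apply] at this
    simp only [Option.elim, one_mul]
    exact this.symm

/-- Every polytope has an extended formulation. -/
lemma exists_isEF_convexHull {ι : Type} [Fintype ι] {S : Set (ι → ℝ)} (hS : S.Finite) :
    ∃ k, IsEF (convexHull ℝ S) k := by
  classical
  obtain ⟨n, v, rfl⟩ : ∃ (n : ℕ) (v : Fin n → ι → ℝ), Set.range v = S := by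
    have := hS.to_subtype
    obtain ⟨n, ⟨e⟩⟩ := Finite.exists_equiv_fin S
    exact ⟨n, fun i => (e.symm i : ι → ℝ), by
      ext x; exact ⟨by rintro ⟨i, rfl⟩; exact (e.symm i).2,
        fun hx => ⟨e ⟨x, hx⟩, by simp⟩⟩⟩
  refine ⟨n, n, 1, -1, 0, Matrix.of fun _ _ => 1, 1,
    (Fintype.linearCombination ℝ v).toAffineMap, ?_⟩
  have himg : convexHull ℝ (Set.range v) =
      Fintype.linearCombination ℝ v '' stdSimplex ℝ (Fin n) := by
    rw [← convexHull_rangle_single_eq_stdSimplex, LinearMap.image_convexHull, ← Set.range_comp]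
    congr 2
    ext i : 1
    simp [Fintype.linearCombination_apply_single]
  rw [himg]
  congr 1
  ext y
  have hA : (-1 : Matrix (Fin n) (Fin n) ℝ).mulVec y = -y := by
    rw [Matrix.neg_mulVec, Matrix.one_mulVec]
  rw [Set.mem_ofPred_eq, hA]
  simp [stdSimplex, Matrix.mulVec, dotProduct]

/-- The **level-one inequality** for a bounded nonnegative function on the cube. -/
lemma level_one_inequality {ι : Type*} [Fintype ι] [DecidableEq ι] (f : (ι → Bool) → ℝ)
    {α : ℝ} (hf : ∀ a, 0 ≤ f a) (hα : ∀ a, f a ≤ α) {μ : ℝ}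
    (hμ : μ * 2 ^ Fintype.card ι = ∑ a, f a) {F : ι → ℝ}
    (hF : ∀ i, F i * 2 ^ Fintype.card ι = ∑ a, (if a i then -1 else 1) * f a) (L : ℝ) :
    ∑ i, F i ^ 2 ≤ 2 * μ * (L * μ + α * Real.exp (-L)) := by
  have hpow : (0 : ℝ) < 2 ^ Fintype.card ι := by positivity
  have hsum : 0 ≤ ∑ a, f a := Finset.sum_nonneg fun a _ => hf a
  have hμ0 : 0 ≤ μ := by
    rw [← hμ] at hsum
    exact nonneg_of_mul_nonneg_left hsum hpow
  rcases hμ0.eq_or_lt with rfl | hμpos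
  · have hzero : ∀ a, f a = 0 := fun a =>
      (Finset.sum_eq_zero_iff_of_nonneg fun a _ => hf a).1 (by rw [← hμ, zero_mul]) a
        (Finset.mem_univ a)
    have : ∀ i, F i = 0 := fun i => by
      have := hF i
      simp only [hzero, mul_zero, Finset.sum_const_zero] at this
      exact (mul_eq_zero.1 this).resolve_right hpow.ne'
    simp [this]
  set lam : ι → ℝ := fun i => F i / μ with hlam
  set s : ℝ := (∑ i, lam i ^ 2) / 2 with hs
  let χ : (ι → Bool) → ℝ := fun a => ∑ i, lam i * (if a i then -1 else 1)
  have hmgf : ∑ a, Real.exp (χ a) ≤ 2 ^ Fintype.card ι * Real.exp s := by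
    have h1 : ∑ a : ι → Bool, Real.exp (χ a) = ∏ i, ∑ b : Bool,
        Real.exp (lam i * (if b then -1 else 1)) := by
      rw [Finset.prod_univ_sum, Fintype.piFinset_univ]
      exact Finset.sum_congr rfl fun a _ => Real.exp_sum _ _
    have h2 : ∀ i, ∑ b : Bool, Real.exp (lam i * (if b then -1 else 1)) ≤
        2 * Real.exp (lam i ^ 2 / 2) := fun i => by
      have := Real.cosh_le_exp_half_sq (lam i)
      rw [Real.cosh_eq] at this
      simp only [Fintype.sum_bool, if_true, Bool.false_eq_true, if_false, mul_one, mul_neg]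
      linarith
    rw [h1]
    refine (Finset.prod_le_prod (fun i _ => Finset.sum_nonneg fun b _ =>
      (Real.exp_pos _).le) fun i _ => h2 i).trans_eq ?_
    rw [Finset.prod_mul_distrib, Finset.prod_const, ← Real.exp_sum, ← Finset.sum_div,
      Finset.card_univ]
  have hχ : ∑ a, f a * χ a = 2 * s * μ * 2 ^ Fintype.card ι := by
    have : ∑ a, f a * χ a = ∑ i, lam i * ∑ a, (if a i then -1 else 1) * f a := by
      simp only [χ, Finset.mul_sum]
      rw [Finset.sum_comm]
      exact Finset.sum_congr rfl fun i _ => Finset.sum_congr rfl fun a _ => by ring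
    rw [this]
    simp only [← hF]
    have h2 : 2 * s * μ * 2 ^ Fintype.card ι = ∑ i, lam i ^ 2 * μ * 2 ^ Fintype.card ι := by
      rw [hs, ← Finset.sum_mul, ← Finset.sum_mul]; ring
    rw [h2]
    refine Finset.sum_congr rfl fun i _ => ?_
    have : F i = lam i * μ := by rw [hlam]; field_simp
    rw [this]; ring
  have hα0 : 0 ≤ α := (hf fun _ => false).trans (hα _)
  have hkey : μ * Real.exp s ≤ α := by
    have h1 : ∀ a, f a * (Real.exp (2 * s) * (1 + χ a - 2 * s)) ≤ α * Real.exp (χ a) := by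
      intro a
      have h := Real.add_one_le_exp (χ a - 2 * s)
      have h3 : Real.exp (2 * s) * (1 + χ a - 2 * s) ≤ Real.exp (χ a) := by
        have : Real.exp (χ a) = Real.exp (2 * s) * Real.exp (χ a - 2 * s) := by
          rw [← Real.exp_add]; ring_nf
        rw [this]
        exact mul_le_mul_of_nonneg_left (by linarith) (Real.exp_pos _).le
      exact (mul_le_mul_of_nonneg_left h3 (hf a)).trans
        (mul_le_mul_of_nonneg_right (hα a) (Real.exp_pos _).le)
    have h2 := Finset.sum_le_sum fun a (_ : a ∈ Finset.univ) => h1 a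
    have h3 : ∑ a, f a * (Real.exp (2 * s) * (1 + χ a - 2 * s)) =
        Real.exp (2 * s) * (μ * 2 ^ Fintype.card ι) := by
      have : ∑ a, f a * (Real.exp (2 * s) * (1 + χ a - 2 * s)) =
          Real.exp (2 * s) * ((1 - 2 * s) * ∑ a, f a + ∑ a, f a * χ a) := by
        rw [Finset.mul_sum, ← Finset.sum_add_distrib, Finset.mul_sum]
        exact Finset.sum_congr rfl fun a _ => by ring
      rw [this, hχ, ← hμ]; ring
    rw [h3, ← Finset.mul_sum] at h2
    have h4 := h2.trans (mul_le_mul_of_nonneg_left hmgf hα0)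
    have h5 : (μ * Real.exp s) * (Real.exp s * 2 ^ Fintype.card ι) ≤
        α * (Real.exp s * 2 ^ Fintype.card ι) := by
      have : Real.exp (2 * s) = Real.exp s * Real.exp s := by rw [← Real.exp_add]; ring_nf
      rw [this] at h4
      linarith
    exact le_of_mul_le_mul_right h5 (by positivity)
  have hsμ : μ * s ≤ L * μ + α * Real.exp (-L) := by
    have h1 := Real.add_one_le_exp (s - L)
    have h2 : Real.exp (s - L) = Real.exp s * Real.exp (-L) := by
      rw [← Real.exp_add]; ring_nf
    have h3 := mul_le_mul_of_nonneg_right hkey (Real.exp_pos (-L)).le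
    have h4 := mul_le_mul_of_nonneg_left h1 hμpos.le
    rw [h2] at h4
    linarith
  have hF2 : ∑ i, F i ^ 2 = 2 * μ * (μ * s) := by
    have : ∀ i, F i ^ 2 = μ ^ 2 * lam i ^ 2 := fun i => by rw [hlam]; field_simp
    simp only [this]
    rw [← Finset.mul_sum, hs]; ring
  rw [hF2]
  exact mul_le_mul_of_nonneg_left hsμ (by positivity)

/-- The mean of a function on the cube. -/
def cubeMean {ι : Type*} [Fintype ι] [DecidableEq ι] (f : (ι → Bool) → ℝ) : ℝ :=
  (∑ a, f a) / 2 ^ Fintype.card ι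

/-- The degree-one Fourier coefficient of a function on the cube. -/
def cubeCoeff {ι : Type*} [Fintype ι] [DecidableEq ι] (i : ι) (f : (ι → Bool) → ℝ) : ℝ :=
  (∑ a, (if a i then -1 else 1) * f a) / 2 ^ Fintype.card ι

/-- The mean of a function over the facet of the cube on which coordinate `i` equals `c`. -/
def facetMean {ι : Type*} [Fintype ι] [DecidableEq ι] (i : ι) (c : Bool)
    (f : (ι → Bool) → ℝ) : ℝ :=
  (∑ a, if a i = c then 2 * f a else 0) / 2 ^ Fintype.card ι

section Cube

variable {ι : Type*} [Fintype ι] [DecidableEq ι]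

lemma cubeMean_nonneg {f : (ι → Bool) → ℝ} (hf : ∀ a, 0 ≤ f a) : 0 ≤ cubeMean f :=
  div_nonneg (Finset.sum_nonneg fun a _ => hf a) (by positivity)

lemma facetMean_nonneg {f : (ι → Bool) → ℝ} (hf : ∀ a, 0 ≤ f a) (i : ι) (c : Bool) :
    0 ≤ facetMean i c f :=
  div_nonneg (Finset.sum_nonneg fun a _ => by
    split_ifs
    · linarith [hf a]
    · exact le_rfl) (by positivity)

lemma facetMean_false (i : ι) (f : (ι → Bool) → ℝ) :
    facetMean i false f = cubeMean f + cubeCoeff i f := by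
  rw [facetMean, cubeMean, cubeCoeff, ← add_div, ← Finset.sum_add_distrib]
  congr 1
  refine Finset.sum_congr rfl fun a _ => ?_
  cases a i
  · simp [two_mul]
  · simp

lemma facetMean_true (i : ι) (f : (ι → Bool) → ℝ) :
    facetMean i true f = cubeMean f - cubeCoeff i f := by
  rw [facetMean, cubeMean, cubeCoeff, ← sub_div, ← Finset.sum_sub_distrib]
  congr 1
  refine Finset.sum_congr rfl fun a _ => ?_
  cases a i
  · simp
  · simp [two_mul]

lemma facetMean_congr {f f' : (ι → Bool) → ℝ} (i : ι) (c : Bool)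
    (h : ∀ a, a i = c → f a = f' a) : facetMean i c f = facetMean i c f' := by
  rw [facetMean, facetMean]
  congr 1
  refine Finset.sum_congr rfl fun a _ => ?_
  split_ifs with hc
  · rw [h a hc]
  · rfl

lemma facetMean_one (i : ι) (c : Bool) : facetMean i c (fun _ => 1) = 1 := by
  have h0 : cubeMean (ι := ι) (fun _ => 1) = 1 := by simp [cubeMean]
  have h1 : cubeCoeff (ι := ι) i (fun _ => 1) = 0 := by
    have h2 : cubeCoeff (ι := ι) i (fun _ => 1) = -cubeCoeff i (fun _ => 1) := by
      rw [cubeCoeff, ← neg_div]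
      congr 1
      rw [← Finset.sum_neg_distrib]
      refine Fintype.sum_equiv
        (Equiv.piCongrRight fun j => if j = i then Equiv.boolNot else Equiv.refl Bool) _ _ ?_
      intro a
      simp only [Equiv.piCongrRight_apply, Pi.map_apply, if_true, Equiv.boolNot_apply]
      cases a i <;> simp
    linarith
  cases c
  · rw [facetMean_false, h0, h1]; simp
  · rw [facetMean_true, h0, h1]; simp

lemma cubeMean_eq_facetMean (i : ι) (f : (ι → Bool) → ℝ) :
    cubeMean f = (facetMean i false f + facetMean i true f) / 2 := by
  rw [facetMean_false, facetMean_true]; ring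

lemma facetMean_const_mul (i : ι) (c : Bool) (r : ℝ) (f : (ι → Bool) → ℝ) :
    facetMean i c (fun a => r * f a) = r * facetMean i c f := by
  rw [facetMean, facetMean, ← mul_div_assoc, Finset.mul_sum]
  congr 1
  refine Finset.sum_congr rfl fun a _ => ?_
  split_ifs <;> ring

lemma facetMean_sum {T : Type*} [Fintype T] (i : ι) (c : Bool) (f : T → (ι → Bool) → ℝ) :
    facetMean i c (fun a => ∑ t, f t a) = ∑ t, facetMean i c (f t) := by
  simp only [facetMean]
  rw [← Finset.sum_div, Finset.sum_comm]
  congr 1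
  refine Finset.sum_congr rfl fun a _ => ?_
  split_ifs
  · rw [Finset.mul_sum]
  · simp

lemma facetMean_const (i : ι) (c : Bool) (r : ℝ) : facetMean (ι := ι) i c (fun _ => r) = r := by
  have := facetMean_const_mul (ι := ι) i c r (fun _ => 1)
  rw [facetMean_one] at this
  simpa using this

lemma facetMean_le {f : (ι → Bool) → ℝ} {r : ℝ} (i : ι) (c : Bool) (h : ∀ a, f a ≤ r) :
    facetMean i c f ≤ r := by
  rw [← facetMean_const (ι := ι) i c r, facetMean, facetMean]
  refine div_le_div_of_nonneg_right (Finset.sum_le_sum fun a _ => ?_) (by positivity)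
  split_ifs
  · linarith [h a]
  · exact le_rfl

/-- If a product matrix is constant on a product of two facets, then the factor means on these
facets multiply to the same constant. -/
lemma sum_facetMean_mul {T : Type*} [Fintype T] {f g : T → (ι → Bool) → ℝ} {i : ι}
    {c d : Bool} {r : ℝ} (h : ∀ a b, a i = c → b i = d → ∑ t, f t a * g t b = r) :
    ∑ t, facetMean i c (f t) * facetMean i d (g t) = r := by
  have h1 : ∀ t, facetMean i c (f t) * facetMean i d (g t) =
      facetMean i c (fun a => facetMean i d (fun b => f t a * g t b)) := fun t => by
    simp only [facetMean_const_mul]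
    rw [mul_comm, ← facetMean_const_mul]
    simp only [mul_comm]
  simp only [h1]
  rw [← facetMean_sum]
  rw [← facetMean_const (ι := ι) i c r]
  refine facetMean_congr i c fun a ha => ?_
  rw [← facetMean_sum, ← facetMean_const (ι := ι) i d r]
  exact facetMean_congr i d fun b hb => h a b ha hb

lemma cubeMean_comp_swap (i j : ι) (f : (ι → Bool) → ℝ) :
    cubeMean (fun a => f (a ∘ Equiv.swap i j)) = cubeMean f := by
  rw [cubeMean, cubeMean]
  congr 1
  exact Fintype.sum_equiv (Equiv.arrowCongr (Equiv.swap i j) (Equiv.refl Bool)) _ _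
    fun a => by simp [Equiv.arrowCongr, Equiv.symm_swap]

lemma cubeCoeff_comp_swap (i j : ι) (f : (ι → Bool) → ℝ) :
    cubeCoeff i (fun a => f (a ∘ Equiv.swap i j)) = cubeCoeff j f := by
  rw [cubeCoeff, cubeCoeff]
  congr 1
  refine Fintype.sum_equiv (Equiv.arrowCongr (Equiv.swap i j) (Equiv.refl Bool)) _ _
    fun a => ?_
  simp [Equiv.arrowCongr, Equiv.symm_swap]

/-- Symmetry between the coordinates turns the level-one inequality into a bound on the average
of a single squared Fourier coefficient. -/
lemma card_mul_sum_cubeCoeff_sq_le {G : Type*} [Fintype G] (i₀ : ι) (e : ι → Equiv.Perm G)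
    (A : G → (ι → Bool) → ℝ) (V : G → ℝ) {α : ℝ} (hA0 : ∀ π a, 0 ≤ A π a)
    (hAα : ∀ π a, A π a ≤ α) (hV0 : ∀ π, 0 ≤ V π)
    (hA : ∀ i π a, A (e i π) a = A π (a ∘ Equiv.swap i₀ i)) (hV : ∀ i π, V (e i π) = V π)
    (L : ℝ) (hL : 0 ≤ L) :
    Fintype.card ι * ∑ π, V π * (cubeCoeff i₀ (A π) ^ 2 / cubeMean (A π)) ≤
      ∑ π, V π * (2 * (L * cubeMean (A π) + α * Real.exp (-L))) := by
  have h1 : ∀ i, ∑ π, V π * (cubeCoeff i₀ (A π) ^ 2 / cubeMean (A π)) =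
      ∑ π, V π * (cubeCoeff i (A π) ^ 2 / cubeMean (A π)) := fun i => by
    rw [← Equiv.sum_comp (e i)]
    refine Finset.sum_congr rfl fun π _ => ?_
    have h2 : A (e i π) = fun a => A π (a ∘ Equiv.swap i₀ i) := funext fun a => hA i π a
    rw [hV, h2, cubeMean_comp_swap, cubeCoeff_comp_swap]
  have h2 : Fintype.card ι * ∑ π, V π * (cubeCoeff i₀ (A π) ^ 2 / cubeMean (A π)) =
      ∑ i, ∑ π, V π * (cubeCoeff i (A π) ^ 2 / cubeMean (A π)) := by
    rw [← Finset.sum_congr rfl fun i _ => h1 i, Finset.sum_const, Finset.card_univ,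
      nsmul_eq_mul]
  rw [h2, Finset.sum_comm]
  refine Finset.sum_le_sum fun π _ => ?_
  rw [← Finset.mul_sum, ← Finset.sum_div]
  refine mul_le_mul_of_nonneg_left ?_ (hV0 π)
  have hμ := cubeMean_nonneg (hA0 π)
  have hα : 0 ≤ α := (hA0 π fun _ => false).trans (hAα π _)
  rcases hμ.eq_or_lt with h0 | hpos
  · rw [← h0]
    simp only [div_zero]
    positivity
  · rw [div_le_iff₀ hpos]
    refine (level_one_inequality (A π) (hA0 π) (hAα π) (μ := cubeMean (A π)) ?_ ?_ L).trans_eq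
      (by ring)
    · rw [cubeMean, div_mul_cancel₀ _ (by positivity)]
    · intro i
      rw [cubeCoeff, div_mul_cancel₀ _ (by positivity)]

end Cube

/-- A product of two quantities is controlled by the product of two reference quantities up to
the relative squared deviations. -/
lemma mul_le_of_sq_dev {μ F ν H : ℝ} (hu : 0 ≤ μ + F) (hu₀ : 0 ≤ μ - F) (hv : 0 ≤ ν + H)
    (hv₀ : 0 ≤ ν - H) :
    (μ + F) * (ν + H) ≤ 441 / 400 * ((μ - F) * (ν - H)) +
      1764 * ((ν + H) * (F ^ 2 / μ) + (μ + F) * (H ^ 2 / ν)) := by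
  have hbig : ∀ {x y : ℝ}, 0 ≤ x + y → 0 ≤ x - y → 21 / 20 * (x - y) < x + y →
      x + y ≤ 1764 * (y ^ 2 / x) := by
    intro x y h1 h2 h3
    have hx : 0 < x := by linarith
    rw [← mul_div_assoc, le_div_iff₀ hx]
    nlinarith
  have hF : 0 ≤ F ^ 2 / μ := div_nonneg (sq_nonneg F) (by linarith)
  have hH : 0 ≤ H ^ 2 / ν := div_nonneg (sq_nonneg H) (by linarith)
  have h1 := mul_nonneg hu₀ hv₀
  have h2 := mul_nonneg hv hF
  have h3 := mul_nonneg hu hH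
  rcases le_or_gt (μ + F) (21 / 20 * (μ - F)) with hc | hc
  · rcases le_or_gt (ν + H) (21 / 20 * (ν - H)) with hd | hd
    · have := mul_le_mul hc hd hv (by linarith)
      linarith
    · have := mul_le_mul_of_nonneg_left (hbig hv hv₀ hd) hu
      linarith
  · have := mul_le_mul_of_nonneg_left (hbig hu hu₀ hc) hv
    linarith

/-- Of five products whose supports are pairwise disjoint along the pentagram, at most two are
nonzero. -/
lemma sum_fin_five_le {u v e : Fin 5 → ℝ} {c : ℝ} (he : ∀ k, 0 ≤ e k)
    (h : ∀ k, u k * v k ≤ c + e k) (hd : ∀ k, u k * v (k + 2) = 0) :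
    ∑ k, u k * v k ≤ 2 * c + ∑ k, e k := by
  have hd' : ∀ k, u k * v k = 0 ∨ u (k + 2) * v (k + 2) = 0 := fun k => by
    rcases mul_eq_zero.1 (hd k) with h0 | h0
    · exact Or.inl (by rw [h0, zero_mul])
    · exact Or.inr (by rw [h0, mul_zero])
  set r : Fin 5 → ℝ := fun k => u k * v k with hr
  have h0 : r 0 = 0 ∨ r 2 = 0 := hd' 0
  have h1 : r 1 = 0 ∨ r 3 = 0 := hd' 1
  have h2 : r 2 = 0 ∨ r 4 = 0 := hd' 2
  have h3 : r 3 = 0 ∨ r 0 = 0 := hd' 3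
  have h4 : r 4 = 0 ∨ r 1 = 0 := hd' 4
  have g0 : r 0 ≤ c + e 0 := h 0
  have g1 : r 1 ≤ c + e 1 := h 1
  have g2 : r 2 ≤ c + e 2 := h 2
  have g3 : r 3 ≤ c + e 3 := h 3
  have g4 : r 4 ≤ c + e 4 := h 4
  have e0 := he 0
  have e1 := he 1
  have e2 := he 2
  have e3 := he 3
  have e4 := he 4
  rw [Fin.sum_univ_five, Fin.sum_univ_five]
  rcases h0 with h0 | h0 <;> rcases h1 with h1 | h1 <;> rcases h2 with h2 | h2 <;>
    rcases h3 with h3 | h3 <;> rcases h4 with h4 | h4 <;> linarith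

/-- The exponential lower bound for nonnegative factorizations, for abstract families of cubes
that exhibit the pentagon pattern and the exchange symmetries. -/
lemma exp_le_card_of_pentagon_cubes {ι G T : Type*} [Fintype ι] [DecidableEq ι] [Fintype G]
    [Nonempty G] [Fintype T] (i₀ : ι) (A B : Fin 5 → T → G → (ι → Bool) → ℝ)
    (hA0 : ∀ k t π a, 0 ≤ A k t π a) (hB0 : ∀ k t π b, 0 ≤ B k t π b)
    (hAk : ∀ k l t π a, a i₀ = true → A k t π a = A l t π a)
    (hBk : ∀ k l t π b, b i₀ = true → B k t π b = B l t π b)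
    (hAB : ∀ k π a b, ∑ t, A k t π a * B k t π b = if a i₀ && b i₀ then 4 else 2)
    (hAB' : ∀ k π a b, a i₀ = false → b i₀ = false →
      ∑ t, A k t π a * B (k + 2) t π b = 0)
    (eA eB : Fin 5 → ι → Equiv.Perm G)
    (hAA : ∀ k i t π a, A k t (eA k i π) a = A k t π (a ∘ Equiv.swap i₀ i))
    (hAB_fix : ∀ k i t π b, b i₀ = false → B k t (eA k i π) b = B k t π b)
    (hBB : ∀ k i t π b, B k t (eB k i π) b = B k t π (b ∘ Equiv.swap i₀ i))
    (hBA_fix : ∀ k i t π a, a i₀ = false → A k t (eB k i π) a = A k t π a)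
    (α β : T → ℝ) (hα : ∀ k t π a, A k t π a ≤ α t) (hβ : ∀ k t π b, B k t π b ≤ β t)
    (hαB : ∀ k t π b, α t * B k t π b ≤ 5 * Fintype.card ι)
    (hβA : ∀ k t π a, β t * A k t π a ≤ 5 * Fintype.card ι) :
    Real.exp (Fintype.card ι / 100000) ≤ 400000 * Fintype.card T := by
  set c : ℝ := (Fintype.card ι : ℝ) with hc
  have hcpos : 0 < c := Nat.cast_pos.2 (Fintype.card_pos_iff.2 ⟨i₀⟩)
  set L : ℝ := c / 100000 with hL
  have hLpos : 0 ≤ L := by positivity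
  set E : ℝ := Real.exp (-L) with hE
  have hEpos : 0 < E := Real.exp_pos _
  let u : Fin 5 → T → G → ℝ := fun k t π => facetMean i₀ false (A k t π)
  let v : Fin 5 → T → G → ℝ := fun k t π => facetMean i₀ false (B k t π)
  let μ : Fin 5 → T → G → ℝ := fun k t π => cubeMean (A k t π)
  let ν : Fin 5 → T → G → ℝ := fun k t π => cubeMean (B k t π)
  let p : Fin 5 → T → G → ℝ := fun k t π => cubeCoeff i₀ (A k t π) ^ 2 / cubeMean (A k t π)
  let q : Fin 5 → T → G → ℝ := fun k t π => cubeCoeff i₀ (B k t π) ^ 2 / cubeMean (B k t π)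
  let u₀ : T → G → ℝ := fun t π => facetMean i₀ true (A 0 t π)
  let v₀ : T → G → ℝ := fun t π => facetMean i₀ true (B 0 t π)
  have hu₀ : ∀ k t π, facetMean i₀ true (A k t π) = u₀ t π := fun k t π =>
    facetMean_congr _ _ fun a ha => hAk k 0 t π a ha
  have hv₀ : ∀ k t π, facetMean i₀ true (B k t π) = v₀ t π := fun k t π =>
    facetMean_congr _ _ fun a ha => hBk k 0 t π a ha
  have hu_nn : ∀ k t π, 0 ≤ u k t π := fun k t π => facetMean_nonneg (hA0 k t π) _ _
  have hv_nn : ∀ k t π, 0 ≤ v k t π := fun k t π => facetMean_nonneg (hB0 k t π) _ _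
  have hu₀_nn : ∀ t π, 0 ≤ u₀ t π := fun t π => facetMean_nonneg (hA0 0 t π) _ _
  have hv₀_nn : ∀ t π, 0 ≤ v₀ t π := fun t π => facetMean_nonneg (hB0 0 t π) _ _
  have hμ_nn : ∀ k t π, 0 ≤ μ k t π := fun k t π => cubeMean_nonneg (hA0 k t π)
  have hν_nn : ∀ k t π, 0 ≤ ν k t π := fun k t π => cubeMean_nonneg (hB0 k t π)
  have hp_nn : ∀ k t π, 0 ≤ p k t π := fun k t π => div_nonneg (sq_nonneg _) (hμ_nn k t π)
  have hq_nn : ∀ k t π, 0 ≤ q k t π := fun k t π => div_nonneg (sq_nonneg _) (hν_nn k t π)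
  have huv : ∀ k π, ∑ t, u k t π * v k t π = 2 := fun k π =>
    sum_facetMean_mul fun a b ha hb => by simpa [ha] using hAB k π a b
  have hu₀v : ∀ k π, ∑ t, u₀ t π * v k t π = 2 := fun k π => by
    have : ∑ t, facetMean i₀ true (A k t π) * facetMean i₀ false (B k t π) = 2 :=
      sum_facetMean_mul fun a b ha hb => by simpa [hb] using hAB k π a b
    simpa only [hu₀] using this
  have huv₀ : ∀ k π, ∑ t, u k t π * v₀ t π = 2 := fun k π => by
    have : ∑ t, facetMean i₀ false (A k t π) * facetMean i₀ true (B k t π) = 2 :=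
      sum_facetMean_mul fun a b ha hb => by simpa [ha] using hAB k π a b
    simpa only [hv₀] using this
  have hu₀v₀ : ∀ π, ∑ t, u₀ t π * v₀ t π = 4 := fun π =>
    sum_facetMean_mul fun a b ha hb => by simpa [ha, hb] using hAB 0 π a b
  have hdisj : ∀ k t π, u k t π * v (k + 2) t π = 0 := fun k t π =>
    (Finset.sum_eq_zero_iff_of_nonneg fun t _ => mul_nonneg (hu_nn k t π) (hv_nn (k + 2) t π)).1
      (sum_facetMean_mul fun a b ha hb => hAB' k π a b ha hb) t (Finset.mem_univ t)
  have hμv : ∀ k π, ∑ t, v k t π * μ k t π = 2 := fun k π => by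
    have : ∀ t, v k t π * μ k t π = (u k t π * v k t π + u₀ t π * v k t π) / 2 := fun t => by
      simp only [μ, cubeMean_eq_facetMean i₀, hu₀]; ring
    simp only [this]
    rw [← Finset.sum_div, Finset.sum_add_distrib, huv, hu₀v]; norm_num
  have hνu : ∀ k π, ∑ t, u k t π * ν k t π = 2 := fun k π => by
    have : ∀ t, u k t π * ν k t π = (u k t π * v k t π + u k t π * v₀ t π) / 2 := fun t => by
      simp only [ν, cubeMean_eq_facetMean i₀, hv₀]; ring
    simp only [this]
    rw [← Finset.sum_div, Finset.sum_add_distrib, huv, huv₀]; norm_num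
  have hlocal : ∀ t π, ∑ k, u k t π * v k t π ≤ 2 * (441 / 400 * (u₀ t π * v₀ t π)) +
      ∑ k, 1764 * (v k t π * p k t π + u k t π * q k t π) := fun t π => by
    refine sum_fin_five_le (fun k => ?_) (fun k => ?_) (fun k => hdisj k t π)
    · have := mul_nonneg (hv_nn k t π) (hp_nn k t π)
      have := mul_nonneg (hu_nn k t π) (hq_nn k t π)
      linarith
    · have h1 : u k t π = μ k t π + cubeCoeff i₀ (A k t π) := facetMean_false _ _
      have h2 : v k t π = ν k t π + cubeCoeff i₀ (B k t π) := facetMean_false _ _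
      have h3 : u₀ t π = μ k t π - cubeCoeff i₀ (A k t π) := by
        rw [← hu₀ k]; exact facetMean_true _ _
      have h4 : v₀ t π = ν k t π - cubeCoeff i₀ (B k t π) := by
        rw [← hv₀ k]; exact facetMean_true _ _
      have h5 := hu_nn k t π
      have h6 := hv_nn k t π
      have h7 := hu₀_nn t π
      have h8 := hv₀_nn t π
      rw [h1] at h5
      rw [h2] at h6
      rw [h3] at h7
      rw [h4] at h8
      rw [h1, h2, h3, h4]
      exact mul_le_of_sq_dev h5 h7 h6 h8
  set g : ℝ := (Fintype.card G : ℝ) with hg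
  have hgpos : 0 < g := Nat.cast_pos.2 Fintype.card_pos
  set r : ℝ := (Fintype.card T : ℝ) with hr
  have havg : ∀ (x y z : T → G → ℝ) (γ : T → ℝ),
      (∀ t, c * ∑ π, x t π * y t π ≤ ∑ π, x t π * (2 * (L * z t π + γ t * E))) →
      (∀ π, ∑ t, x t π * z t π = 2) → (∀ t π, γ t * x t π ≤ 5 * c) →
      c * ∑ t, ∑ π, x t π * y t π ≤ g * (4 * L + 10 * c * r * E) := by
    intro x y z γ h1 h2 h3
    have h4 : ∀ π, ∑ t, x t π * (2 * (L * z t π + γ t * E)) ≤ 4 * L + 10 * c * r * E := by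
      intro π
      have h5 : ∑ t, x t π * (2 * (L * z t π + γ t * E)) =
          2 * L * (∑ t, x t π * z t π) + 2 * E * ∑ t, γ t * x t π := by
        rw [Finset.mul_sum, Finset.mul_sum, ← Finset.sum_add_distrib]
        exact Finset.sum_congr rfl fun t _ => by ring
      have h6 : ∑ t, γ t * x t π ≤ r * (5 * c) := by
        refine (Finset.sum_le_sum fun t _ => h3 t π).trans_eq ?_
        rw [Finset.sum_const, Finset.card_univ, nsmul_eq_mul]
      have h7 := mul_le_mul_of_nonneg_left h6 (by positivity : (0 : ℝ) ≤ 2 * E)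
      rw [h5, h2]
      linarith
    calc c * ∑ t, ∑ π, x t π * y t π = ∑ t, c * ∑ π, x t π * y t π := Finset.mul_sum _ _ _
      _ ≤ ∑ t, ∑ π, x t π * (2 * (L * z t π + γ t * E)) := Finset.sum_le_sum fun t _ => h1 t
      _ = ∑ π, ∑ t, x t π * (2 * (L * z t π + γ t * E)) := Finset.sum_comm
      _ ≤ ∑ _π : G, (4 * L + 10 * c * r * E) := Finset.sum_le_sum fun π _ => h4 π
      _ = g * (4 * L + 10 * c * r * E) := by
        rw [Finset.sum_const, Finset.card_univ, nsmul_eq_mul]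
  have hp_sum : ∀ k, c * ∑ t, ∑ π, v k t π * p k t π ≤ g * (4 * L + 10 * c * r * E) := fun k =>
    havg (v k) (p k) (μ k) α
      (fun t => card_mul_sum_cubeCoeff_sq_le i₀ (eA k) (A k t) (v k t) (hA0 k t) (hα k t)
        (hv_nn k t) (fun i => hAA k i t)
        (fun i π => facetMean_congr _ _ fun b hb => hAB_fix k i t π b hb) L hLpos)
      (hμv k) fun t π => by
        rw [← facetMean_const_mul]
        exact facetMean_le _ _ fun b => hαB k t π b
  have hq_sum : ∀ k, c * ∑ t, ∑ π, u k t π * q k t π ≤ g * (4 * L + 10 * c * r * E) := fun k =>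
    havg (u k) (q k) (ν k) β
      (fun t => card_mul_sum_cubeCoeff_sq_le i₀ (eB k) (B k t) (u k t) (hB0 k t) (hβ k t)
        (hu_nn k t) (fun i => hBB k i t)
        (fun i π => facetMean_congr _ _ fun a ha => hBA_fix k i t π a ha) L hLpos)
      (hνu k) fun t π => by
        rw [← facetMean_const_mul]
        exact facetMean_le _ _ fun a => hβA k t π a
  have htotal : g * 10 ≤ g * (441 / 50) + 1764 *
      ∑ k, (∑ t, ∑ π, v k t π * p k t π + ∑ t, ∑ π, u k t π * q k t π) := by
    have h1 : ∑ t, ∑ π, ∑ k, u k t π * v k t π = g * 10 := by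
      rw [Finset.sum_comm]
      have : ∀ π, ∑ t, ∑ k, u k t π * v k t π = 10 := fun π => by
        rw [Finset.sum_comm]
        simp only [huv]
        norm_num
      simp only [this]
      rw [Finset.sum_const, Finset.card_univ, nsmul_eq_mul]
    have h2 : ∑ t, ∑ π, 2 * (441 / 400 * (u₀ t π * v₀ t π)) = g * (441 / 50) := by
      rw [Finset.sum_comm]
      have : ∀ π, ∑ t, 2 * (441 / 400 * (u₀ t π * v₀ t π)) = 441 / 50 := fun π => by
        rw [← Finset.mul_sum, ← Finset.mul_sum, hu₀v₀]
        norm_num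
      simp only [this]
      rw [Finset.sum_const, Finset.card_univ, nsmul_eq_mul]
    have h3 : ∑ t, ∑ π, ∑ k, 1764 * (v k t π * p k t π + u k t π * q k t π) =
        1764 * ∑ k, (∑ t, ∑ π, v k t π * p k t π + ∑ t, ∑ π, u k t π * q k t π) := by
      have : ∀ t, ∑ π, ∑ k, 1764 * (v k t π * p k t π + u k t π * q k t π) =
          ∑ k, ∑ π, 1764 * (v k t π * p k t π + u k t π * q k t π) := fun t => Finset.sum_comm
      simp only [this]
      rw [Finset.sum_comm, Finset.mul_sum]
      refine Finset.sum_congr rfl fun k _ => ?_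
      simp only [← Finset.mul_sum, Finset.sum_add_distrib]
    rw [← h1, ← h2, ← h3, ← Finset.sum_add_distrib]
    refine Finset.sum_le_sum fun t _ => ?_
    rw [← Finset.sum_add_distrib]
    exact Finset.sum_le_sum fun π _ => hlocal t π
  have hbound : c * ∑ k, (∑ t, ∑ π, v k t π * p k t π + ∑ t, ∑ π, u k t π * q k t π) ≤
      10 * (g * (4 * L + 10 * c * r * E)) := by
    rw [Finset.mul_sum]
    refine (Finset.sum_le_sum fun k _ => (?_ : _ ≤ 2 * (g * (4 * L + 10 * c * r * E)))).trans_eq ?_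
    · rw [mul_add]
      linarith [hp_sum k, hq_sum k]
    · rw [Finset.sum_const, Finset.card_univ, Fintype.card_fin, nsmul_eq_mul]
      push_cast; ring
  have hfinal : 1 ≤ 400000 * r * E := by
    have h1 := mul_le_mul_of_nonneg_left htotal hcpos.le
    have h2 : (g * c) * 10 ≤ (g * c) * (441 / 50 + 17640 * (4 / 100000 + 10 * (r * E))) := by
      have h3 : c = 100000 * L := by rw [hL]; ring
      have h4 : g * (4 * L + 10 * c * r * E) = g * c * (4 / 100000 + 10 * (r * E)) := by
        rw [hL]; ring
      rw [h4] at hbound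
      linarith
    have h3 := le_of_mul_le_mul_left h2 (mul_pos hgpos hcpos)
    have h4 : 0 ≤ r * E := by positivity
    linarith
  have hexp : E * Real.exp L = 1 := by rw [hE, ← Real.exp_add]; simp
  calc Real.exp L = 1 * Real.exp L := (one_mul _).symm
    _ ≤ 400000 * r * E * Real.exp L := mul_le_mul_of_nonneg_right hfinal (Real.exp_pos _).le
    _ = 400000 * r := by rw [mul_assoc, hexp, mul_one]

/-- The number of points of `Z` that are fixed by `τ` or sent outside `Z` by `τ`. -/
def crossCount {V : Type*} [Fintype V] [DecidableEq V] (τ : V → V) (Z : V → Bool) : ℕ :=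
  #{x | Z x = true ∧ (τ x = x ∨ Z (τ x) = false)}

lemma crossCount_eq_sum {V : Type*} [Fintype V] [DecidableEq V] (τ : V → V) (Z : V → Bool) :
    crossCount τ Z = ∑ x, if Z x = true ∧ (τ x = x ∨ Z (τ x) = false) then 1 else 0 :=
  Finset.card_filter _ _

lemma crossCount_le {V : Type*} [Fintype V] [DecidableEq V] (τ : V → V) (Z : V → Bool) :
    crossCount τ Z ≤ Fintype.card V :=
  Finset.card_le_univ _

lemma crossCount_conj {V : Type*} [Fintype V] [DecidableEq V] (π : Equiv.Perm V) (τ : V → V)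
    (Z : V → Bool) :
    crossCount (fun x => π (τ (π.symm x))) (fun x => Z (π.symm x)) = crossCount τ Z := by
  rw [crossCount_eq_sum, crossCount_eq_sum, ← Equiv.sum_comp π]
  simp

/-- The ground set of the pentagon construction: a pentagon and `2 N` pairs, the first half
controlled by the involution and the second half by the set. -/
abbrev PentIdx (N : ℕ) : Type := Fin 5 ⊕ (Bool × Fin N × Bool)

/-- The involution swapping the endpoints of the `k`-th pentagon edge (unless `a none`) and of
the pairs of the first half (unless `a (some j)`). -/
def pentInvol {N : ℕ} (k : Fin 5) (a : Option (Fin N) → Bool) : PentIdx N → PentIdx N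
  | Sum.inl i => Sum.inl (if a none = true then i else if i = k then k + 1 else
      if i = k + 1 then k else i)
  | Sum.inr (o, j, s) => Sum.inr (o, j, if o = false ∧ a (some j) = true then s else !s)

/-- The set containing the pentagon (except the `k`-th edge unless `b none`) and the pairs of the
second half selected by `b`. -/
def pentSet {N : ℕ} (k : Fin 5) (b : Option (Fin N) → Bool) : PentIdx N → Bool
  | Sum.inl i => b none || (i ≠ k ∧ i ≠ k + 1 : Bool)
  | Sum.inr (o, j, _) => o && b (some j)

/-- The function exchanging the `k`-th pentagon edge with the `j`-th pair of one half. -/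
def pentExchFun {N : ℕ} (o : Bool) (k : Fin 5) (j : Fin N) : PentIdx N → PentIdx N
  | Sum.inl i => if i = k then Sum.inr (o, j, false) else
      if i = k + 1 then Sum.inr (o, j, true) else Sum.inl i
  | Sum.inr (o', j', s) => if o' = o ∧ j' = j then Sum.inl (if s = true then k + 1 else k) else
      Sum.inr (o', j', s)

lemma pentInvol_involutive {N : ℕ} (k : Fin 5) (a : Option (Fin N) → Bool) :
    Function.Involutive (pentInvol k a) := by
  have hk : k + 1 ≠ k := by revert k; decide
  rintro (i | ⟨o, j, s⟩)
  · by_cases h1 : i = k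
    · cases h : a none <;> simp [pentInvol, h, h1, hk]
    · by_cases h2 : i = k + 1
      · cases h : a none <;> simp [pentInvol, h, h2, hk]
      · cases h : a none <;> simp [pentInvol, h, h1, h2]
  · simp only [pentInvol]
    split_ifs <;> simp

lemma pentExchFun_involutive {N : ℕ} (o : Bool) (k : Fin 5) (j : Fin N) :
    Function.Involutive (pentExchFun o k j) := by
  have hk : k + 1 ≠ k := by revert k; decide
  rintro (i | ⟨o', j', s⟩)
  · by_cases h1 : i = k
    · simp [pentExchFun, h1]
    · by_cases h2 : i = k + 1
      · simp [pentExchFun, h2, hk]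
      · simp [pentExchFun, h1, h2]
  · by_cases h1 : o' = o ∧ j' = j
    · obtain ⟨rfl, rfl⟩ := h1
      cases s <;> simp [pentExchFun, hk]
    · simp [pentExchFun, h1]

/-- The permutation exchanging the `k`-th pentagon edge with a pair of one half. -/
def pentExch {N : ℕ} (o : Bool) (k : Fin 5) : Option (Fin N) → Equiv.Perm (PentIdx N)
  | none => 1
  | some j => (pentExchFun_involutive o k j).toPerm

lemma pentExch_false_pentInvol {N : ℕ} (k : Fin 5) (i : Option (Fin N))
    (a : Option (Fin N) → Bool) (x : PentIdx N) :
    pentExch false k i (pentInvol k a x) =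
      pentInvol k (a ∘ Equiv.swap none i) (pentExch false k i x) := by
  have hk : k + 1 ≠ k := by revert k; decide
  cases i with
  | none => simp [pentExch]
  | some j =>
    change pentExchFun false k j _ = pentInvol k _ (pentExchFun false k j x)
    rcases x with i | ⟨o, j', s⟩
    · by_cases h1 : i = k
      · subst h1
        cases h : a none <;> simp [pentExchFun, pentInvol, h, hk]
      · by_cases h2 : i = k + 1
        · subst h2
          cases h : a none <;> simp [pentExchFun, pentInvol, h, hk]
        · cases h : a none <;> simp [pentExchFun, pentInvol, h, h1, h2]
    · by_cases h1 : o = false ∧ j' = j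
      · obtain ⟨rfl, rfl⟩ := h1
        cases h : a (some j') <;> cases s <;> simp [pentExchFun, pentInvol, h, hk]
      · cases o
        · have h2 : j' ≠ j := fun h => h1 ⟨rfl, h⟩
          have h3 : Equiv.swap none (some j) (some j') = some j' :=
            Equiv.swap_apply_of_ne_of_ne (by simp) (by simpa using h2)
          simp [pentExchFun, pentInvol, h2, h3]
        · simp [pentExchFun, pentInvol]

lemma pentSet_pentExch_false {N : ℕ} (k : Fin 5) (i : Option (Fin N))
    (b : Option (Fin N) → Bool) (hb : b none = false) (x : PentIdx N) :
    pentSet k b (pentExch false k i x) = pentSet k b x := by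
  cases i with
  | none => simp [pentExch]
  | some j =>
    change pentSet k b (pentExchFun false k j x) = _
    rcases x with i | ⟨o, j', s⟩
    · by_cases h1 : i = k
      · simp [pentExchFun, pentSet, h1, hb]
      · by_cases h2 : i = k + 1
        · by_cases h3 : k + 1 = k <;> simp [pentExchFun, pentSet, h2, h3, hb]
        · simp [pentExchFun, pentSet, h1, h2]
    · by_cases h1 : o = false ∧ j' = j
      · obtain ⟨rfl, rfl⟩ := h1
        cases s <;> simp [pentExchFun, pentSet, hb]
      · simp [pentExchFun, h1]

lemma pentSet_pentExch_true {N : ℕ} (k : Fin 5) (i : Option (Fin N))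
    (b : Option (Fin N) → Bool) (x : PentIdx N) :
    pentSet k (b ∘ Equiv.swap none i) (pentExch true k i x) = pentSet k b x := by
  have hk : k + 1 ≠ k := by revert k; decide
  cases i with
  | none => simp [pentExch]
  | some j =>
    change pentSet k _ (pentExchFun true k j x) = _
    rcases x with i | ⟨o, j', s⟩
    · by_cases h1 : i = k
      · simp [pentExchFun, pentSet, h1]
      · by_cases h2 : i = k + 1
        · simp [pentExchFun, pentSet, h2, hk]
        · simp [pentExchFun, pentSet, h1, h2]
    · by_cases h1 : o = true ∧ j' = j
      · obtain ⟨rfl, rfl⟩ := h1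
        cases s <;> simp [pentExchFun, pentSet]
      · cases o
        · simp [pentExchFun, pentSet]
        · have h2 : j' ≠ j := fun h => h1 ⟨rfl, h⟩
          have h3 : Equiv.swap none (some j) (some j') = some j' :=
            Equiv.swap_apply_of_ne_of_ne (by simp) (by simpa using h2)
          simp [pentExchFun, pentSet, h2, h3]

lemma pentExch_true_pentInvol {N : ℕ} (k : Fin 5) (i : Option (Fin N))
    (a : Option (Fin N) → Bool) (ha : a none = false) (x : PentIdx N) :
    pentExch true k i (pentInvol k a x) = pentInvol k a (pentExch true k i x) := by
  have hk : k + 1 ≠ k := by revert k; decide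
  cases i with
  | none => simp [pentExch]
  | some j =>
    change pentExchFun true k j _ = pentInvol k _ (pentExchFun true k j x)
    rcases x with i | ⟨o, j', s⟩
    · by_cases h1 : i = k
      · simp [pentExchFun, pentInvol, h1, hk, ha]
      · by_cases h2 : i = k + 1
        · simp [pentExchFun, pentInvol, h2, hk, ha]
        · simp [pentExchFun, pentInvol, h1, h2, ha]
    · by_cases h1 : o = true ∧ j' = j
      · obtain ⟨rfl, rfl⟩ := h1
        cases s <;> simp [pentExchFun, pentInvol, ha, hk]
      · simp [pentExchFun, pentInvol, h1]

lemma crossCount_pent {N : ℕ} (k l : Fin 5) (a b : Option (Fin N) → Bool) :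
    crossCount (pentInvol k a) (pentSet l b) =
      crossCount (fun i : Fin 5 => if a none = true then i else if i = k then k + 1 else
          if i = k + 1 then k else i) (fun i => b none || (i ≠ l ∧ i ≠ l + 1 : Bool)) := by
  rw [crossCount_eq_sum, Fintype.sum_sum_type, crossCount_eq_sum]
  have h0 : ∀ y : Bool × Fin N × Bool, (if pentSet l b (Sum.inr y) = true ∧
      (pentInvol k a (Sum.inr y) = Sum.inr y ∨
        pentSet l b (pentInvol k a (Sum.inr y)) = false) then 1 else 0) = 0 := by
    rintro ⟨o, j, s⟩
    cases o <;> cases h : b (some j) <;> simp [pentSet, pentInvol, h]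
  rw [Finset.sum_eq_zero fun y _ => h0 y, add_zero]
  refine Finset.sum_congr rfl fun i _ => ?_
  simp only [pentSet, pentInvol, Sum.inl.injEq]

lemma crossCount_pent_self {N : ℕ} (k : Fin 5) (a b : Option (Fin N) → Bool) :
    crossCount (pentInvol k a) (pentSet k b) = if a none && b none then 5 else 3 := by
  rw [crossCount_pent]
  generalize a none = x
  generalize b none = y
  revert k x y
  decide

lemma crossCount_pent_disjoint {N : ℕ} (k : Fin 5) (a b : Option (Fin N) → Bool)
    (ha : a none = false) (hb : b none = false) :
    crossCount (pentInvol k a) (pentSet (k + 2) b) = 1 := by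
  rw [crossCount_pent, ha, hb]
  revert k
  decide

lemma odd_card_pentSet {N : ℕ} (k : Fin 5) (b : Option (Fin N) → Bool) :
    Odd #{x | pentSet k b x = true} := by
  rw [Finset.card_filter, Fintype.sum_sum_type]
  refine Odd.add_even ?_ ?_
  · have h : ∀ (k : Fin 5) (y : Bool),
        Odd (∑ i : Fin 5, if (y || (i ≠ k ∧ i ≠ k + 1 : Bool)) = true then 1 else 0) := by
      decide
    exact h k (b none)
  · simp only [pentSet, Fintype.sum_prod_type, Fintype.sum_bool]
    refine Even.add ?_ ?_ <;> exact Finset.even_sum _ fun j _ => ⟨_, rfl⟩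

lemma odd_card_comp_perm {V : Type*} [Fintype V] {Z : V → Bool}
    (hZ : Odd #{x | Z x = true}) (π : Equiv.Perm V) :
    Odd #{x | Z (π.symm x) = true} := by
  rw [Finset.card_filter] at hZ ⊢
  rwa [Equiv.sum_comp π.symm fun x => if Z x = true then 1 else 0]

lemma involutive_conj {V : Type*} {τ : V → V} (hτ : Function.Involutive τ)
    (π : Equiv.Perm V) : Function.Involutive fun x => π (τ (π.symm x)) := fun x => by
  simp [hτ (π.symm x)]

/-- Every nonnegative factorization of the matrix `crossCount - 1`, with rows indexed by
involutions and columns by odd sets, has exponentially many terms. -/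
theorem exp_le_card_of_crossCount_factorization (N : ℕ) {T : Type*} [Fintype T]
    (f : T → {τ : PentIdx N → PentIdx N // Function.Involutive τ} → ℝ)
    (g : T → {Z : PentIdx N → Bool // Odd #{x | Z x = true}} → ℝ)
    (hf : ∀ t x, 0 ≤ f t x) (hg : ∀ t y, 0 ≤ g t y)
    (h : ∀ x y, ∑ t, f t x * g t y = (crossCount x.1 y.1 : ℝ) - 1) :
    Real.exp (((N : ℝ) + 1) / 100000) ≤ 400000 * Fintype.card T := by
  let row : Fin 5 → Equiv.Perm (PentIdx N) → (Option (Fin N) → Bool) →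
      {τ : PentIdx N → PentIdx N // Function.Involutive τ} := fun k π a =>
    ⟨fun x => π (pentInvol k a (π.symm x)), involutive_conj (pentInvol_involutive k a) π⟩
  let col : Fin 5 → Equiv.Perm (PentIdx N) → (Option (Fin N) → Bool) →
      {Z : PentIdx N → Bool // Odd #{x | Z x = true}} := fun k π b =>
    ⟨fun x => pentSet k b (π.symm x), odd_card_comp_perm (odd_card_pentSet k b) π⟩
  have hcross : ∀ k l π a b, crossCount (row k π a).1 (col l π b).1 =
      crossCount (pentInvol k a) (pentSet l b) := fun k l π a b =>
    crossCount_conj π (pentInvol k a) (pentSet l b)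
  have : Nonempty {τ : PentIdx N → PentIdx N // Function.Involutive τ} :=
    ⟨row 0 1 fun _ => false⟩
  have : Nonempty {Z : PentIdx N → Bool // Odd #{x | Z x = true}} := ⟨col 0 1 fun _ => false⟩
  choose xmax hxmax using fun t => Finite.exists_max (f t)
  choose ymax hymax using fun t => Finite.exists_max (g t)
  have hprod : ∀ t x y, f t x * g t y ≤ 5 * Fintype.card (Option (Fin N)) := by
    intro t x y
    have h1 := Finset.single_le_sum (f := fun t => f t x * g t y)
      (fun t _ => mul_nonneg (hf t x) (hg t y)) (Finset.mem_univ t)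
    have h2 : (crossCount x.1 y.1 : ℝ) ≤ Fintype.card (PentIdx N) :=
      Nat.cast_le.2 (crossCount_le _ _)
    simp only [h] at h1
    simp only [Fintype.card_sum, Fintype.card_prod, Fintype.card_bool, Fintype.card_fin,
      Fintype.card_option] at h2 ⊢
    push_cast at h2 ⊢
    linarith [(Nat.cast_nonneg N : (0 : ℝ) ≤ N)]
  have hexch : ∀ (o : Bool) (k : Fin 5) (i : Option (Fin N)) (x : PentIdx N),
      (pentExch o k i).symm x = pentExch o k i x := by
    rintro o k (_ | j) x <;> rfl
  have key := exp_le_card_of_pentagon_cubes (ι := Option (Fin N))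
    (G := Equiv.Perm (PentIdx N)) (T := T) none
    (fun k t π a => f t (row k π a)) (fun k t π b => g t (col k π b))
    (fun k t π a => hf _ _) (fun k t π b => hg _ _) ?_ ?_ ?_ ?_
    (fun k i => Equiv.mulRight (pentExch false k i))
    (fun k i => Equiv.mulRight (pentExch true k i)) ?_ ?_ ?_ ?_
    (fun t => f t (xmax t)) (fun t => g t (ymax t))
    (fun k t π a => hxmax t _) (fun k t π b => hymax t _) (fun k t π b => hprod _ _ _)
    (fun k t π a => by rw [mul_comm]; exact hprod _ _ _)
  · simpa using key
  · intro k l t π a ha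
    have : pentInvol k a = pentInvol l a := by
      funext x; rcases x with i | ⟨o, j, s⟩ <;> simp [pentInvol, ha]
    simp only [row, this]
  · intro k l t π b hb
    have : pentSet k b = pentSet l b := by
      funext x; rcases x with i | ⟨o, j, s⟩ <;> simp [pentSet, hb]
    simp only [col, this]
  · intro k π a b
    rw [h, hcross, crossCount_pent_self]
    split_ifs <;> norm_num
  · intro k π a b ha hb
    rw [h, hcross, crossCount_pent_disjoint k a b ha hb]
    norm_num
  · intro k i t π a
    congr 1
    refine Subtype.ext (funext fun x => ?_)
    change π (pentExch false k i (pentInvol k a ((pentExch false k i).symm (π.symm x)))) =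
      π (pentInvol k (a ∘ Equiv.swap none i) (π.symm x))
    rw [pentExch_false_pentInvol, Equiv.apply_symm_apply]
  · intro k i t π b hb
    congr 1
    refine Subtype.ext (funext fun x => ?_)
    change pentSet k b ((pentExch false k i).symm (π.symm x)) = pentSet k b (π.symm x)
    rw [hexch, pentSet_pentExch_false k i b hb]
  · intro k i t π b
    congr 1
    refine Subtype.ext (funext fun x => ?_)
    change pentSet k b ((pentExch true k i).symm (π.symm x)) =
      pentSet k (b ∘ Equiv.swap none i) (π.symm x)
    rw [← pentSet_pentExch_true k i b, Equiv.apply_symm_apply]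
  · intro k i t π a ha
    congr 1
    refine Subtype.ext (funext fun x => ?_)
    change π (pentExch true k i (pentInvol k a ((pentExch true k i).symm (π.symm x)))) =
      π (pentInvol k a (π.symm x))
    rw [pentExch_true_pentInvol k i a ha, Equiv.apply_symm_apply]

/-- The sizes of `2 d` unit jobs followed by `d` jobs of size two. -/
def unitDoubleSizes (d : ℕ) : Fin (2 * d + d) → ℕ :=
  Fin.addCases (fun _ => 1) (fun _ => 2)

lemma unitDoubleSizes_eq_one_or_two (d : ℕ) (j : Fin (2 * d + d)) :
    unitDoubleSizes d j = 1 ∨ unitDoubleSizes d j = 2 := by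
  refine Fin.addCases (fun j => ?_) (fun j => ?_) j <;> simp [unitDoubleSizes]

lemma sum_mul_load {n m : ℕ} (p : Fin n → ℕ) (σ : Fin n → Fin m) (y : Fin m → ℕ) :
    ∑ i, y i * load p σ i = ∑ j, y (σ j) * p j := by
  simp only [load, Finset.mul_sum, mul_ite, mul_zero]
  rw [Finset.sum_comm]
  simp

lemma sum_load_unitDoubleSizes {d m : ℕ} (σ : Fin (2 * d + d) → Fin m) :
    ∑ i, load (unitDoubleSizes d) σ i = 2 * (2 * d) := by
  have := sum_mul_load (unitDoubleSizes d) σ fun _ => 1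
  simp only [one_mul] at this
  rw [this, Fin.sum_univ_add]
  simp [unitDoubleSizes]
  ring

lemma two_le_makespan {d : ℕ} (hd : 0 < d) (σ : Fin (2 * d + d) → Fin (2 * d)) :
    2 ≤ makespan (unitDoubleSizes d) σ := by
  have h1 : ∑ i, load (unitDoubleSizes d) σ i ≤
      ∑ _i : Fin (2 * d), makespan (unitDoubleSizes d) σ :=
    Finset.sum_le_sum fun i _ => Finset.le_sup (f := load (unitDoubleSizes d) σ)
      (Finset.mem_univ i)
  rw [sum_load_unitDoubleSizes, Finset.sum_const, Finset.card_univ, Fintype.card_fin,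
    smul_eq_mul, mul_comm] at h1
  exact Nat.le_of_mul_le_mul_left h1 (by omega)

lemma load_eq_two {d : ℕ} (σ : Fin (2 * d + d) → Fin (2 * d))
    (hσ : makespan (unitDoubleSizes d) σ ≤ 2) (i : Fin (2 * d)) :
    load (unitDoubleSizes d) σ i = 2 := by
  have h1 : ∀ i ∈ Finset.univ, load (unitDoubleSizes d) σ i ≤ 2 := fun i hi =>
    (Finset.le_sup (f := load (unitDoubleSizes d) σ) hi).trans hσ
  refine (Finset.sum_eq_sum_iff_of_le h1).1 ?_ i (Finset.mem_univ i)
  rw [sum_load_unitDoubleSizes]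
  simp [mul_comm]

/-- A schedule of makespan two cannot send the unit jobs of an odd set exactly to the machines
of the same set. -/
lemma exists_mismatch {d : ℕ} (σ : Fin (2 * d + d) → Fin (2 * d))
    (hσ : makespan (unitDoubleSizes d) σ ≤ 2) (U : Fin (2 * d) → Bool)
    (hU : Odd #{i | U i = true}) : ∃ j, U j ≠ U (σ (Fin.castAdd d j)) := by
  by_contra! hcon
  have h1 := sum_mul_load (unitDoubleSizes d) σ fun i => if U i = true then 1 else 0
  simp only [load_eq_two σ hσ] at h1
  rw [Fin.sum_univ_add, ← Finset.sum_mul] at h1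
  simp only [← hcon, unitDoubleSizes, Fin.addCases_left, Fin.addCases_right, mul_one] at h1
  rw [← Finset.sum_mul, ← Finset.card_filter] at h1
  obtain ⟨q, hq⟩ := hU
  omega

/-- The affine functional counting the unit jobs that are separated from their machine by `U`,
minus one. -/
def mismatchFunctional {d : ℕ} (U : Fin (2 * d) → Bool) :
    (Fin (2 * d) × Fin (2 * d + d) → ℝ) →ᵃ[ℝ] ℝ :=
  (∑ j, ∑ i, (if U j ≠ U i then (1 : ℝ) else 0) •
    (LinearMap.proj (i, Fin.castAdd d j) : (Fin (2 * d) × Fin (2 * d + d) → ℝ) →ₗ[ℝ] ℝ)).toAffineMap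
    - AffineMap.const ℝ _ 1

lemma mismatchFunctional_assignVec {d : ℕ} (U : Fin (2 * d) → Bool)
    (σ : Fin (2 * d + d) → Fin (2 * d)) :
    mismatchFunctional U (assignVec σ) =
      ((#{j | U j ≠ U (σ (Fin.castAdd d j))} : ℕ) : ℝ) - 1 := by
  rw [Finset.card_filter]
  simp only [mismatchFunctional, AffineMap.coe_sub, Pi.sub_apply, LinearMap.coe_toAffineMap,
    AffineMap.const_apply, LinearMap.sum_apply, LinearMap.smul_apply, LinearMap.proj_apply,
    assignVec, smul_eq_mul]
  simp

lemma mismatchFunctional_nonneg {d : ℕ} {U : Fin (2 * d) → Bool} (hU : Odd #{i | U i = true})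
    {Q : Set (Fin (2 * d) × Fin (2 * d + d) → ℝ)}
    (hQ : ∃ S : Set (Fin (2 * d) × Fin (2 * d + d) → ℝ), S.Finite ∧ Q = convexHull ℝ S)
    (hext : ∀ x ∈ Set.extremePoints ℝ Q, ∃ σ : Fin (2 * d + d) → Fin (2 * d),
      x = assignVec σ ∧ makespan (unitDoubleSizes d) σ ≤ 2) :
    ∀ z ∈ Q, 0 ≤ mismatchFunctional U z := by
  obtain ⟨S, hS, hQS⟩ := hQ
  have hcomp : IsCompact Q := hQS ▸ hS.isCompact_convexHull ℝ
  have hconv : Convex ℝ Q := hQS ▸ convex_convexHull ℝ S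
  have hsub : closure (convexHull ℝ (Set.extremePoints ℝ Q)) ⊆
      mismatchFunctional U ⁻¹' Set.Ici 0 := by
    refine closure_minimal (convexHull_min ?_ ((convex_Ici 0).affine_preimage _))
      (isClosed_Ici.preimage (mismatchFunctional U).continuous_of_finiteDimensional)
    intro x hx
    obtain ⟨σ, rfl, hσ⟩ := hext x hx
    obtain ⟨j, hj⟩ := exists_mismatch σ hσ U hU
    rw [Set.mem_preimage, Set.mem_Ici, mismatchFunctional_assignVec, sub_nonneg,
      Nat.one_le_cast, Nat.one_le_iff_ne_zero]
    exact (Finset.card_pos.2 ⟨j, by simpa using hj⟩).ne'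
  rw [closure_convexHull_extremePoints hcomp hconv] at hsub
  exact hsub

/-- In a fixed-point-free involution exactly half of the points are mapped downwards. -/
lemma card_descents {d : ℕ} {F : Fin (2 * d) → Fin (2 * d)} (hF : Function.Involutive F)
    (hF' : ∀ i, F i ≠ i) : Fintype.card {i // F i < i} = d := by
  have h1 : ∑ i, (if F i < i then 1 else 0) = ∑ i, (if i < F i then 1 else 0) := by
    rw [← Equiv.sum_comp (hF.toPerm F)]
    simp [hF _]
  have h2 : ∑ i, ((if F i < i then 1 else 0) + (if i < F i then 1 else 0)) = 2 * d := by
    have : ∀ i, (if F i < i then 1 else 0) + (if i < F i then 1 else 0) = 1 := fun i => by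
      rcases (hF' i).lt_or_gt with h | h
      · simp [h, h.not_gt]
      · simp [h, h.not_gt]
    simp [this]
  rw [Finset.sum_add_distrib, ← h1] at h2
  rw [Fintype.card_subtype, Finset.card_filter]
  omega

/-- The schedule of makespan two that puts the unit jobs `i` and `F i` together and the jobs of
size two on the remaining machines. -/
lemma exists_schedule_of_involutive {d : ℕ} {F : Fin (2 * d) → Fin (2 * d)}
    (hF : Function.Involutive F) (hF' : ∀ i, F i ≠ i) :
    ∃ σ : Fin (2 * d + d) → Fin (2 * d), makespan (unitDoubleSizes d) σ ≤ 2 ∧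
      ∀ j, σ (Fin.castAdd d j) = min j (F j) := by
  let δ : Fin d ≃ {i // F i < i} := (Fintype.equivFinOfCardEq (card_descents hF hF')).symm
  refine ⟨Fin.addCases (fun j => min j (F j)) (fun k => (δ k : Fin (2 * d))),
    Finset.sup_le fun i _ => ?_, fun j => by simp⟩
  rw [load, Fin.sum_univ_add]
  simp only [Fin.addCases_left, Fin.addCases_right, unitDoubleSizes]
  have h2 : ∑ k, (if (δ k : Fin (2 * d)) = i then 2 else 0) = if F i < i then 2 else 0 := by
    rw [Equiv.sum_comp δ fun x : {i // F i < i} => if (x : Fin (2 * d)) = i then 2 else 0]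
    rw [← Finset.sum_subtype (Finset.univ.filter fun x => F x < x) (by simp)
      fun x => if x = i then 2 else 0]
    simp
  rw [h2, ← Finset.card_filter]
  rcases (hF' i).lt_or_gt with h | h
  · rw [if_pos h, Finset.card_eq_zero.2, zero_add]
    refine Finset.filter_eq_empty_iff.2 fun j _ hj => ?_
    rcases min_choice j (F j) with h3 | h3
    · rw [h3] at hj
      subst hj
      exact absurd h (not_lt.2 (min_eq_left_iff.1 h3))
    · rw [h3] at hj
      subst hj
      rw [hF] at h
      exact absurd h (not_lt.2 (min_eq_right_iff.1 h3))
  · rw [if_neg h.not_gt, add_zero]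
    refine (Finset.card_le_card (t := {i, F i}) fun j hj => ?_).trans Finset.card_le_two
    have hj := (Finset.mem_filter.1 hj).2
    rcases min_choice j (F j) with h3 | h3
    · rw [h3] at hj
      simp [hj]
    · rw [h3] at hj
      simp [← hj, hF j]

lemma optMakespan_unitDoubleSizes {d : ℕ} (hd : 0 < d) {F : Fin (2 * d) → Fin (2 * d)}
    (hF : Function.Involutive F) (hF' : ∀ i, F i ≠ i) :
    optMakespan (2 * d + d) (2 * d) (unitDoubleSizes d) = 2 := by
  obtain ⟨σ, hσ, -⟩ := exists_schedule_of_involutive hF hF'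
  have hσ2 : makespan (unitDoubleSizes d) σ = 2 := hσ.antisymm (two_le_makespan hd σ)
  refine le_antisymm (Nat.sInf_le ⟨σ, hσ2⟩) (le_csInf ⟨2, σ, hσ2⟩ ?_)
  rintro t ⟨σ', rfl⟩
  exact two_le_makespan hd σ'

/-- The number of separated unit jobs in the schedule induced by an involution. -/
lemma card_mismatch_of_involutive {d : ℕ} {F : Fin (2 * d) → Fin (2 * d)}
    (hF : Function.Involutive F) (U : Fin (2 * d) → Bool) :
    #{j | U j ≠ U (min j (F j))} = #{j | U j = true ∧ U (F j) = false} := by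
  have hdouble : ∀ h : Fin (2 * d) → ℕ, 2 * ∑ j, h j = ∑ j, (h j + h (F j)) := fun h => by
    rw [Finset.sum_add_distrib]
    have : ∑ j, h (F j) = ∑ j, h j := Equiv.sum_comp (hF.toPerm F) h
    omega
  rw [Finset.card_filter, Finset.card_filter]
  refine Nat.eq_of_mul_eq_mul_left two_pos ?_
  rw [hdouble, hdouble]
  refine Finset.sum_congr rfl fun j _ => ?_
  rw [hF j, min_comm (F j) j]
  rcases min_choice j (F j) with h | h <;> rw [h] <;> cases U j <;> cases U (F j) <;> simp

/-- The fixed-point-free involution on `V × Bool` induced by an involution on `V`. -/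
def pairInvol {V : Type*} [DecidableEq V] (τ : V → V) (x : V × Bool) : V × Bool :=
  (τ x.1, if τ x.1 = x.1 then !x.2 else x.2)

lemma pairInvol_involutive {V : Type*} [DecidableEq V] {τ : V → V}
    (hτ : Function.Involutive τ) : Function.Involutive (pairInvol τ) := by
  rintro ⟨i, s⟩
  by_cases h : τ i = i
  · simp [pairInvol, h]
  · have h' : ¬i = τ i := fun h' => h h'.symm
    simp [pairInvol, h, h', hτ i]

lemma pairInvol_ne {V : Type*} [DecidableEq V] (τ : V → V) (x : V × Bool) :
    pairInvol τ x ≠ x := by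
  obtain ⟨i, s⟩ := x
  by_cases h : τ i = i <;> simp [pairInvol, h]

lemma card_pairInvol {V : Type*} [Fintype V] [DecidableEq V] (τ : V → V) (Z : V → Bool) :
    #{x : V × Bool | (Z x.1 && !x.2) = true ∧
      (Z (pairInvol τ x).1 && !(pairInvol τ x).2) = false} = crossCount τ Z := by
  rw [crossCount_eq_sum, Finset.card_filter, Fintype.sum_prod_type]
  refine Finset.sum_congr rfl fun i _ => ?_
  rw [Fintype.sum_bool]
  by_cases h : τ i = i
  · cases hi : Z i <;> simp [pairInvol, h, hi]
  · cases hi : Z i <;> cases hi' : Z (τ i) <;> simp [pairInvol, h, hi']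

/-- Involutions and odd sets yield, respectively, schedules of makespan two and valid
inequalities, with slack `crossCount - 1`. -/
lemma exp_le_xc_of_schedules (N : ℕ) {d : ℕ} (φ : PentIdx N × Bool ≃ Fin (2 * d))
    {Q : Set (Fin (2 * d) × Fin (2 * d + d) → ℝ)}
    (hQ : ∃ S : Set (Fin (2 * d) × Fin (2 * d + d) → ℝ), S.Finite ∧ Q = convexHull ℝ S)
    (hext : ∀ x ∈ Set.extremePoints ℝ Q, ∃ σ : Fin (2 * d + d) → Fin (2 * d),
      x = assignVec σ ∧ makespan (unitDoubleSizes d) σ ≤ 2)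
    (hmem : ∀ σ : Fin (2 * d + d) → Fin (2 * d),
      makespan (unitDoubleSizes d) σ ≤ 2 → assignVec σ ∈ Q) :
    Real.exp (((N : ℝ) + 1) / 100000) ≤ 400000 * ((xc Q : ℝ) + 1) := by
  have hxc : IsEF Q (xc Q) := by
    obtain ⟨S, hS, rfl⟩ := hQ
    exact Nat.sInf_mem (exists_isEF_convexHull hS)
  let F : {τ : PentIdx N → PentIdx N // Function.Involutive τ} → Fin (2 * d) → Fin (2 * d) :=
    fun τ i => φ (pairInvol τ.1 (φ.symm i))
  have hF : ∀ τ, Function.Involutive (F τ) := fun τ i => by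
    simp [F, pairInvol_involutive τ.2 (φ.symm i)]
  have hF' : ∀ τ i, F τ i ≠ i := fun τ i h =>
    pairInvol_ne τ.1 (φ.symm i) (φ.injective (by simpa [F] using h))
  let U : {Z : PentIdx N → Bool // Odd #{x | Z x = true}} → Fin (2 * d) → Bool :=
    fun Z i => Z.1 (φ.symm i).1 && !(φ.symm i).2
  have hU : ∀ Z, Odd #{i | U Z i = true} := fun Z => by
    have h1 := Z.2
    rw [Finset.card_filter] at h1 ⊢
    have h2 : ∀ x, ∑ s, (if U Z (φ (x, s)) = true then 1 else 0) =
        if Z.1 x = true then 1 else 0 := fun x => by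
      rw [Fintype.sum_bool]
      simp [U]
    rw [← Equiv.sum_comp φ, Fintype.sum_prod_type]
    simpa only [h2] using h1
  choose σ hσ hσmin using fun τ => exists_schedule_of_involutive (hF τ) (hF' τ)
  have : Nonempty {τ : PentIdx N → PentIdx N // Function.Involutive τ} :=
    ⟨⟨id, fun _ => rfl⟩⟩
  obtain ⟨f, g, hf, hg, hfg⟩ := hxc.exists_factorization (fun τ => assignVec (σ τ))
    (fun τ => hmem _ (hσ τ)) (fun Z => mismatchFunctional (U Z))
    (fun Z => mismatchFunctional_nonneg (hU Z) hQ hext)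
  have key := exp_le_card_of_crossCount_factorization N f g hf hg fun τ Z => by
    rw [hfg, mismatchFunctional_assignVec]
    simp only [hσmin]
    rw [card_mismatch_of_involutive (hF τ), ← card_pairInvol, Finset.card_filter,
      Finset.card_filter, ← Equiv.sum_comp φ]
    simp only [U, F, Equiv.symm_apply_apply]
  rw [Fintype.card_option, Fintype.card_fin] at key
  exact_mod_cast key

lemma two_rpow_div_log_le_exp {n : ℕ} (hn : 2 ≤ n) :
    (2 : ℝ) ^ (1 * n / Real.log n) ≤ Real.exp n := by
  have hlog2 : 0 < Real.log 2 := Real.log_pos one_lt_two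
  have hlog : Real.log 2 ≤ Real.log n :=
    Real.log_le_log two_pos (by exact_mod_cast hn)
  rw [Real.rpow_def_of_pos two_pos, one_mul, ← mul_div_assoc, Real.exp_le_exp,
    div_le_iff₀ (hlog2.trans_le hlog), mul_comm]
  exact mul_le_mul_of_nonneg_left hlog (Nat.cast_nonneg n)

lemma exp_le_of_exp_add_le {x y : ℝ} (hx : 0 ≤ x)
    (h : Real.exp (x + 14) ≤ 400000 * (y + 1)) : Real.exp x ≤ y := by
  have h1 : (800000 : ℝ) ≤ Real.exp 14 := by
    have h2 : Real.exp 14 = Real.exp 1 ^ 14 := by rw [← Real.exp_nat_mul]; norm_num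
    have h3 : (2.7 : ℝ) ≤ Real.exp 1 := by linarith [Real.exp_one_gt_d9]
    rw [h2]
    calc (800000 : ℝ) ≤ 2.7 ^ 14 := by norm_num
      _ ≤ Real.exp 1 ^ 14 := pow_le_pow_left₀ (by norm_num) h3 14
  rw [Real.exp_add] at h
  have h4 : 1 ≤ Real.exp x := Real.one_le_exp hx
  nlinarith

/-- For every `0 < ε ≤ 1/2` there are instances of `P||C_max` with `O(n)` jobs and
machines, processing times in `{1,2}` and optimal makespan `2`, such that every polytope
contained in `Q(J,M)` whose extreme points are assignment vectors of schedules of makespan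
at most `(3/2 − ε)·opt` and which contains the assignment vector of every schedule of
makespan `opt = 2` has extension complexity at least `2^(c·n/log n)`. -/
theorem makespan_large_xc_approx (ε : ℝ) (hε0 : 0 < ε) (hε : ε ≤ 1 / 2) :
    ∃ c C : ℝ, 0 < c ∧ 1 ≤ C ∧ ∀ n : ℕ, 2 ≤ n →
      ∃ (nJ m : ℕ) (p : Fin nJ → ℕ),
        (nJ : ℝ) ≤ C * n ∧ (m : ℝ) ≤ C * n ∧
        (∀ j, p j = 1 ∨ p j = 2) ∧
        optMakespan nJ m p = 2 ∧
        ∀ Qbar : Set (Fin m × Fin nJ → ℝ),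
          (∃ S : Set (Fin m × Fin nJ → ℝ), S.Finite ∧ Qbar = convexHull ℝ S) →
          Qbar ⊆ Qpoly nJ m →
          (∀ x ∈ Set.extremePoints ℝ Qbar, ∃ σ : Fin nJ → Fin m,
            x = assignVec σ ∧
            (makespan p σ : ℝ) ≤ (3 / 2 - ε) * (optMakespan nJ m p : ℝ)) →
          (∀ σ : Fin nJ → Fin m, makespan p σ = optMakespan nJ m p →
            assignVec σ ∈ Qbar) →
          (2 : ℝ) ^ (c * n / Real.log n) ≤ (xc Qbar : ℝ) := by
  refine ⟨1, 10000000, one_pos, by norm_num, fun n hn => ?_⟩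
  set N : ℕ := 100000 * (n + 14) with hN
  set d : ℕ := Fintype.card (PentIdx N) with hd
  have hdN : d = 5 + 4 * N := by
    simp [hd]
    ring
  have hd0 : 0 < d := by omega
  let φ : PentIdx N × Bool ≃ Fin (2 * d) := Fintype.equivFinOfCardEq (by
    rw [Fintype.card_prod, Fintype.card_bool, mul_comm])
  have hopt : optMakespan (2 * d + d) (2 * d) (unitDoubleSizes d) = 2 :=
    optMakespan_unitDoubleSizes hd0 (F := fun i => φ (pairInvol id (φ.symm i)))
      (fun i => by simp [pairInvol_involutive (τ := id) (fun _ => rfl) (φ.symm i)])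
      (fun i h => pairInvol_ne id (φ.symm i) (φ.injective (by simpa using h)))
  have hjobs : 2 * d + d ≤ 10000000 * n := by omega
  refine ⟨2 * d + d, 2 * d, unitDoubleSizes d, by exact_mod_cast hjobs,
    by exact_mod_cast (Nat.le_add_right _ _).trans hjobs, unitDoubleSizes_eq_one_or_two d, hopt,
    fun Qbar hQ _ hext hmem => ?_⟩
  rw [hopt] at hext hmem
  have key := exp_le_xc_of_schedules N φ hQ
    (fun x hx => by
      obtain ⟨σ, h1, h2⟩ := hext x hx
      refine ⟨σ, h1, Nat.lt_succ_iff.1 ?_⟩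
      have : (makespan (unitDoubleSizes d) σ : ℝ) < 3 := by
        push_cast at h2
        linarith
      exact_mod_cast this)
    (fun σ hσ => hmem σ (hσ.antisymm (two_le_makespan hd0 σ)))
  refine (two_rpow_div_log_le_exp hn).trans (exp_le_of_exp_add_le (Nat.cast_nonneg n) ?_)
  refine (Real.exp_le_exp.2 ?_).trans key
  rw [hN]
  push_cast
  linarith
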